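/- Let μ be a compactly supported signed measure on ℝⁿ, n ≥ 3, of dimension α > n-2. Then for every a > 0 there exists b = b(a) < ∞ such that |∫_{ℝⁿ} |φ(x)|² dμ(x)| ≤ a ‖φ‖²_{Ḣ¹} + b ‖φ‖²_{L²(ℝⁿ)} for all φ ∈ H¹(ℝⁿ). In particular, the quadratic form of μ is infinitesimally form-bounded relative to −Δ. -/

import Mathlib

open MeasureTheory Metric

/-!
Along the segment from `x` to `x + y`,
`|φ(x)|² ≤ 2 |φ(x + y)|² + 2 |y|² (∫₀¹ |Dφ(x + t y)| dt)²`, and Cauchy–Schwarz with the weight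
`t ^ s`, `s = (α - n) / 2`, bounds the last square by a multiple of
`∫₀¹ t ^ (-s) |Dφ(x + t y)|² dt`; the weight is integrable because `α > n - 2` means `s > -1`.
Average over `|y| < δ` and integrate in `x` against a positive measure `ν` with
`ν (B(x, r)) ≤ C r ^ α`. By Tonelli, averaging over `B(x, t δ)` turns `ν` into Lebesgue measure at
the cost of a factor of order `(t δ) ^ (α - n) = (t δ) ^ (2 s)`, and `t ^ (-s) t ^ (2 s) = t ^ s`
is again integrable. The coefficient of `‖Dφ‖₂²` is of order `δ ^ (α - n + 2)`, hence tends to `0`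
with `δ`.
-/

open Module Set Filter Topology
open scoped ENNReal

section Integration

variable {X : Type*} [MeasurableSpace X] {μ : Measure X}

theorem lintegral_sq_le_lintegral_mul_lintegral_inv_mul_sq {w g : X → ℝ≥0∞}
    (hw : AEMeasurable w μ) (hg : AEMeasurable g μ) (hw_ne : ∀ᵐ x ∂μ, w x ≠ 0 ∧ w x ≠ ∞) :
    (∫⁻ x, g x ∂μ) ^ 2 ≤ (∫⁻ x, w x ∂μ) * ∫⁻ x, (w x)⁻¹ * g x ^ 2 ∂μ := by
  have factor : ∀ᵐ x ∂μ, g x = w x ^ (1 / 2 : ℝ) * ((w x)⁻¹ * g x ^ 2) ^ (1 / 2 : ℝ) := by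
    filter_upwards [hw_ne] with x ⟨h0, htop⟩
    rw [← ENNReal.mul_rpow_of_nonneg _ _ (by norm_num), ← mul_assoc,
      ENNReal.mul_inv_cancel h0 htop, one_mul, ← ENNReal.rpow_two, ← ENNReal.rpow_mul]
    norm_num
  have holder : ∫⁻ x, g x ∂μ ≤
      (∫⁻ x, w x ∂μ) ^ (1 / 2 : ℝ) * (∫⁻ x, (w x)⁻¹ * g x ^ 2 ∂μ) ^ (1 / 2 : ℝ) := by
    rw [lintegral_congr_ae factor]
    exact ENNReal.lintegral_mul_norm_pow_le hw (hw.inv.mul (hg.pow_const 2))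
      (by norm_num) (by norm_num) (by norm_num)
  refine (pow_le_pow_left' holder 2).trans_eq ?_
  rw [← ENNReal.mul_rpow_of_nonneg _ _ (by norm_num), ← ENNReal.rpow_two, ← ENNReal.rpow_mul]
  norm_num

theorem lintegral_lintegral_lintegral_rotate {Y Z : Type*} [MeasurableSpace Y] [MeasurableSpace Z]
    [SFinite μ] {ν : Measure Y} [SFinite ν] {ξ : Measure Z} [SFinite ξ] {f : X → Y → Z → ℝ≥0∞}
    (hf : Measurable fun p : (X × Y) × Z => f p.1.1 p.1.2 p.2) :
    ∫⁻ x, ∫⁻ y, ∫⁻ z, f x y z ∂ξ ∂ν ∂μ = ∫⁻ z, ∫⁻ x, ∫⁻ y, f x y z ∂ν ∂μ ∂ξ := by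
  calc ∫⁻ x, ∫⁻ y, ∫⁻ z, f x y z ∂ξ ∂ν ∂μ
      = ∫⁻ p, ∫⁻ z, f p.1 p.2 z ∂ξ ∂(μ.prod ν) :=
        (lintegral_prod _ hf.lintegral_prod_right'.aemeasurable).symm
    _ = ∫⁻ z, ∫⁻ p, f p.1 p.2 z ∂(μ.prod ν) ∂ξ := lintegral_lintegral_swap hf.aemeasurable
    _ = ∫⁻ z, ∫⁻ x, ∫⁻ y, f x y z ∂ν ∂μ ∂ξ := by
        congr 1 with z
        exact lintegral_prod _ (hf.comp measurable_prodMk_right).aemeasurable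

theorem setLAverage_comp_of_map_eq_smul {Y : Type*} [MeasurableSpace Y] {ν : Measure Y} {f : X → Y}
    (hf : MeasurableEmbedding f) {c : ℝ≥0∞} (hc : c ≠ 0) (hc_top : c ≠ ∞)
    (hmap : μ.map f = c • ν) (s : Set Y) (h : Y → ℝ≥0∞) :
    ⨍⁻ x in f ⁻¹' s, h (f x) ∂μ = ⨍⁻ y in s, h y ∂ν := by
  rw [setLAverage_eq, setLAverage_eq, ← hf.map_apply, ← hf.lintegral_map,
    ← hf.restrict_map, hmap, Measure.restrict_smul, lintegral_smul_measure, Measure.smul_apply,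
    smul_eq_mul, smul_eq_mul, ENNReal.mul_div_mul_left _ _ hc hc_top]

theorem ofReal_integral_norm_sq_eq_lintegral {F : Type*} [NormedAddCommGroup F] {f : X → F}
    (hf : MemLp f 2 μ) : ENNReal.ofReal (∫ x, ‖f x‖ ^ 2 ∂μ) = ∫⁻ x, ‖f x‖ₑ ^ 2 ∂μ := by
  rw [ofReal_integral_eq_lintegral_ofReal (hf.integrable_norm_pow two_ne_zero)
    (ae_of_all _ fun x => by positivity)]
  simp only [ENNReal.ofReal_pow (norm_nonneg _), ofReal_norm]

theorem memLp_two_of_lintegral_enorm_sq_ne_top {F : Type*} [NormedAddCommGroup F] {f : X → F}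
    (hf : AEStronglyMeasurable f μ) (h : ∫⁻ x, ‖f x‖ₑ ^ 2 ∂μ ≠ ∞) : MemLp f 2 μ := by
  refine ⟨hf, (eLpNorm_lt_top_iff_lintegral_rpow_enorm_lt_top (by simp) (by simp)).2 ?_⟩
  simpa using h.lt_top

theorem abs_integral_posPart_sub_integral_negPart_le (σ : SignedMeasure X) {f : X → ℝ}
    (hf : Integrable f σ.totalVariation) :
    |∫ x, f x ∂σ.toJordanDecomposition.posPart - ∫ x, f x ∂σ.toJordanDecomposition.negPart| ≤
      ∫ x, |f x| ∂σ.totalVariation := by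
  obtain ⟨hpos, hneg⟩ := integrable_add_measure.1 hf
  rw [SignedMeasure.totalVariation, integral_add_measure hpos.abs hneg.abs]
  exact (abs_sub _ _).trans (add_le_add abs_integral_le_integral_abs abs_integral_le_integral_abs)

end Integration

theorem lintegral_Ioo_zero_one_rpow {s : ℝ} (hs : -1 < s) :
    ∫⁻ t in Ioo (0 : ℝ) 1, ENNReal.ofReal (t ^ s) = ENNReal.ofReal (s + 1)⁻¹ := by
  rw [← ofReal_integral_eq_lintegral_ofReal
    ((intervalIntegral.integrableOn_Ioo_rpow_iff one_pos).2 hs)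
    ((ae_restrict_mem measurableSet_Ioo).mono fun t ht => Real.rpow_nonneg ht.1.le s),
    ← integral_Ioc_eq_integral_Ioo, ← intervalIntegral.integral_of_le zero_le_one,
    integral_rpow (.inl hs), Real.one_rpow, Real.zero_rpow (by linarith), sub_zero, one_div]

/-- A measure `ν` is upper Ahlfors `α`-regular with constant `C` if every ball of radius `r` has
measure at most `C r ^ α`; this is the meaning of a measure being of dimension `α`. -/
def IsUpperRegular {X : Type*} [PseudoMetricSpace X] [MeasurableSpace X] (ν : Measure X)
    (C α : ℝ) : Prop :=
  ∀ x r, 0 < r → ν (ball x r) ≤ ENNReal.ofReal (C * r ^ α)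

namespace IsUpperRegular

section BallGrowth

variable {X : Type*} [PseudoMetricSpace X] [MeasurableSpace X] {ν : Measure X} {C α : ℝ}

theorem isLocallyFiniteMeasure (hν : IsUpperRegular ν C α) : IsLocallyFiniteMeasure ν :=
  ⟨fun x => ⟨ball x 1, ball_mem_nhds x one_pos, (hν x 1 one_pos).trans_lt ENNReal.ofReal_lt_top⟩⟩

theorem lintegral_setLIntegral_ball_le [SecondCountableTopology X] [OpensMeasurableSpace X]
    (hν : IsUpperRegular ν C α) (η : Measure X) [SFinite η] {h : X → ℝ≥0∞} (hh : Measurable h)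
    {r : ℝ} (hr : 0 < r) :
    ∫⁻ x, ∫⁻ z in ball x r, h z ∂η ∂ν ≤ ENNReal.ofReal (C * r ^ α) * ∫⁻ z, h z ∂η := by
  have := hν.isLocallyFiniteMeasure
  have hmeas : Measurable fun p : X × X => (ball p.1 r).indicator h p.2 :=
    (hh.comp measurable_snd).indicator
      (measurableSet_lt (measurable_snd.dist measurable_fst) measurable_const)
  calc ∫⁻ x, ∫⁻ z in ball x r, h z ∂η ∂ν
      = ∫⁻ x, ∫⁻ z, (ball x r).indicator h z ∂η ∂ν := by
        simp only [lintegral_indicator measurableSet_ball]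
    _ = ∫⁻ z, ∫⁻ x, (ball x r).indicator h z ∂ν ∂η := lintegral_lintegral_swap hmeas.aemeasurable
    _ = ∫⁻ z, ∫⁻ x, (ball z r).indicator (fun _ => h z) x ∂ν ∂η := by
        simp only [indicator, mem_ball, dist_comm]
    _ = ∫⁻ z, h z * ν (ball z r) ∂η := by
        simp only [lintegral_indicator measurableSet_ball, setLIntegral_const]
    _ ≤ ∫⁻ z, h z * ENNReal.ofReal (C * r ^ α) ∂η := by gcongr with z; exact hν z r hr
    _ = ENNReal.ofReal (C * r ^ α) * ∫⁻ z, h z ∂η := by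
        rw [lintegral_mul_const _ hh, mul_comm]

end BallGrowth

end IsUpperRegular

section Haar

variable {E : Type*} [NormedAddCommGroup E] [NormedSpace ℝ E] [FiniteDimensional ℝ E]
  [MeasurableSpace E] [BorelSpace E] (η : Measure E) [η.IsAddHaarMeasure]

theorem setLAverage_ball_comp_add_smul (h : E → ℝ≥0∞) (x : E) {t : ℝ} (ht : 0 < t) (δ : ℝ) :
    ⨍⁻ y in ball 0 δ, h (x + t • y) ∂η = ⨍⁻ z in ball x (t * δ), h z ∂η := by
  have hsmul : MeasurableEmbedding fun y : E => t • y := measurableEmbedding_const_smul₀ ht.ne'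
  have hadd : MeasurableEmbedding fun y : E => x + y := measurableEmbedding_addLeft x
  have hmap : η.map (fun y => x + t • y) = ENNReal.ofReal |(t ^ finrank ℝ E)⁻¹| • η := by
    rw [← Function.comp_def (x + ·), ← Measure.map_map hadd.measurable hsmul.measurable,
      Measure.map_addHaar_smul η ht.ne', Measure.map_smul, map_add_left_eq_self]
  have hball : (fun y => x + t • y) ⁻¹' ball x (t * δ) = ball 0 δ := by
    ext y
    simp [dist_eq_norm, norm_smul, abs_of_pos ht, ht]
  rw [← hball]
  exact setLAverage_comp_of_map_eq_smul (hadd.comp hsmul)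
    (by simpa using by positivity) ENNReal.ofReal_ne_top hmap _ _

theorem IsUpperRegular.lintegral_setLAverage_ball_le {ν : Measure E} {C α : ℝ}
    (hν : IsUpperRegular ν C α) {h : E → ℝ≥0∞} (hh : Measurable h) {r : ℝ} (hr : 0 < r) :
    ∫⁻ x, ⨍⁻ z in ball x r, h z ∂η ∂ν ≤
      ENNReal.ofReal (C / η.real (ball 0 1) * r ^ (α - finrank ℝ E)) * ∫⁻ z, h z ∂η := by
  have hvol (x : E) : η (ball x r) = ENNReal.ofReal (r ^ finrank ℝ E * η.real (ball 0 1)) := by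
    rw [Measure.addHaar_ball_of_pos _ _ hr, ENNReal.ofReal_mul (by positivity),
      ofReal_measureReal measure_ball_lt_top.ne]
  have hunit : 0 < η.real (ball (0 : E) 1) :=
    ENNReal.toReal_pos (measure_ball_pos η 0 one_pos).ne' measure_ball_lt_top.ne
  have hconst : C / η.real (ball (0 : E) 1) * r ^ (α - finrank ℝ E) =
      (r ^ finrank ℝ E * η.real (ball (0 : E) 1))⁻¹ * (C * r ^ α) := by
    rw [Real.rpow_sub hr, Real.rpow_natCast]
    field_simp
  have hvol_ne : ENNReal.ofReal (r ^ finrank ℝ E * η.real (ball (0 : E) 1)) ≠ 0 := by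
    simpa using by positivity
  rw [hconst, ENNReal.ofReal_mul (by positivity), ENNReal.ofReal_inv_of_pos (by positivity),
    mul_assoc]
  simp only [setLAverage_eq, hvol, ENNReal.div_eq_inv_mul]
  rw [lintegral_const_mul' _ _ (ENNReal.inv_ne_top.2 hvol_ne)]
  gcongr
  exact hν.lintegral_setLIntegral_ball_le η hh hr

end Haar

section Segment

variable {E F : Type*} [NormedAddCommGroup E] [NormedSpace ℝ E] [NormedAddCommGroup F]
  [NormedSpace ℝ F] {φ : E → F}

theorem enorm_sub_le_enorm_mul_lintegral_fderiv (hφ : ContDiff ℝ 1 φ) (x y : E) :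
    ‖φ (x + y) - φ x‖ₑ ≤ ‖y‖ₑ * ∫⁻ t in Ioo (0 : ℝ) 1, ‖fderiv ℝ φ (x + t • y)‖ₑ := by
  have hderiv (t : ℝ) : deriv (fun t : ℝ => φ (x + t • y)) t = fderiv ℝ φ (x + t • y) y :=
    ((hφ.differentiable one_ne_zero _).hasFDerivAt.comp_hasDerivAt t
      (by simpa using ((hasDerivAt_id t).smul_const y).const_add x)).deriv
  have hseg : ContDiffOn ℝ 1 (fun t : ℝ => φ (x + t • y)) (Icc 0 1) := by fun_prop
  calc ‖φ (x + y) - φ x‖ₑ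
      ≤ ∫⁻ t in Ioo (0 : ℝ) 1, ‖fderiv ℝ φ (x + t • y) y‖ₑ := by
        simpa [hderiv, restrict_Ioo_eq_restrict_Icc] using
          enorm_sub_le_lintegral_deriv_of_contDiffOn_Icc hseg zero_le_one
    _ ≤ ∫⁻ t in Ioo (0 : ℝ) 1, ‖y‖ₑ * ‖fderiv ℝ φ (x + t • y)‖ₑ := by
        gcongr with t
        exact (ContinuousLinearMap.le_opENorm _ _).trans_eq (mul_comm _ _)
    _ = ‖y‖ₑ * ∫⁻ t in Ioo (0 : ℝ) 1, ‖fderiv ℝ φ (x + t • y)‖ₑ :=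
        lintegral_const_mul' _ _ enorm_ne_top

theorem enorm_sq_le_add_lintegral_enorm_fderiv_sq (hφ : ContDiff ℝ 1 φ) {s : ℝ} (hs : -1 < s)
    (x y : E) :
    ‖φ x‖ₑ ^ 2 ≤ 2 * ‖φ (x + y)‖ₑ ^ 2 + 2 * ‖y‖ₑ ^ 2 * (ENNReal.ofReal (s + 1)⁻¹ *
      ∫⁻ t in Ioo (0 : ℝ) 1, (ENNReal.ofReal (t ^ s))⁻¹ * ‖fderiv ℝ φ (x + t • y)‖ₑ ^ 2) := by
  have : Continuous (fderiv ℝ φ) := hφ.continuous_fderiv one_ne_zero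
  have cauchy_schwarz : (∫⁻ t in Ioo (0 : ℝ) 1, ‖fderiv ℝ φ (x + t • y)‖ₑ) ^ 2 ≤
      ENNReal.ofReal (s + 1)⁻¹ *
        ∫⁻ t in Ioo (0 : ℝ) 1, (ENNReal.ofReal (t ^ s))⁻¹ * ‖fderiv ℝ φ (x + t • y)‖ₑ ^ 2 := by
    rw [← lintegral_Ioo_zero_one_rpow hs]
    refine lintegral_sq_le_lintegral_mul_lintegral_inv_mul_sq (by fun_prop)
      (by fun_prop : Continuous fun t : ℝ => ‖fderiv ℝ φ (x + t • y)‖ₑ).aemeasurable ?_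
    filter_upwards [ae_restrict_mem measurableSet_Ioo] with t ht
    exact ⟨(ENNReal.ofReal_pos.2 (Real.rpow_pos_of_pos ht.1 s)).ne', ENNReal.ofReal_ne_top⟩
  have add_sq (u v : ℝ≥0∞) : (u + v) ^ 2 ≤ 2 * u ^ 2 + 2 * v ^ 2 := by
    have := ENNReal.rpow_add_le_mul_rpow_add_rpow u v one_le_two
    norm_num at this
    rwa [mul_add] at this
  calc ‖φ x‖ₑ ^ 2 = ‖φ (x + y) - (φ (x + y) - φ x)‖ₑ ^ 2 := by rw [sub_sub_cancel]
    _ ≤ (‖φ (x + y)‖ₑ + ‖φ (x + y) - φ x‖ₑ) ^ 2 := by gcongr; exact enorm_sub_le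
    _ ≤ 2 * ‖φ (x + y)‖ₑ ^ 2 + 2 * ‖φ (x + y) - φ x‖ₑ ^ 2 := add_sq _ _
    _ ≤ 2 * ‖φ (x + y)‖ₑ ^ 2 +
          2 * (‖y‖ₑ * ∫⁻ t in Ioo (0 : ℝ) 1, ‖fderiv ℝ φ (x + t • y)‖ₑ) ^ 2 := by
        gcongr
        exact enorm_sub_le_enorm_mul_lintegral_fderiv hφ x y
    _ ≤ _ := by rw [mul_pow, ← mul_assoc]; gcongr

theorem enorm_sq_le_add_setLAverage_ball [ProperSpace E] [MeasurableSpace E] [BorelSpace E]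
    (η : Measure E) [η.IsOpenPosMeasure] [IsFiniteMeasureOnCompacts η] (hφ : ContDiff ℝ 1 φ)
    {s : ℝ} (hs : -1 < s) (x : E) {δ : ℝ} (hδ : 0 < δ) :
    ‖φ x‖ₑ ^ 2 ≤ 2 * ⨍⁻ y in ball 0 δ, ‖φ (x + y)‖ₑ ^ 2 ∂η +
      2 * ENNReal.ofReal δ ^ 2 * (ENNReal.ofReal (s + 1)⁻¹ * ⨍⁻ y in ball 0 δ,
        (∫⁻ t in Ioo (0 : ℝ) 1,
          (ENNReal.ofReal (t ^ s))⁻¹ * ‖fderiv ℝ φ (x + t • y)‖ₑ ^ 2) ∂η) := by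
  set G : E → ℝ≥0∞ := fun y =>
    ∫⁻ t in Ioo (0 : ℝ) 1, (ENNReal.ofReal (t ^ s))⁻¹ * ‖fderiv ℝ φ (x + t • y)‖ₑ ^ 2
  have hmeas : Measurable fun y => 2 * ‖φ (x + y)‖ₑ ^ 2 :=
    ((hφ.continuous.comp (continuous_const_add x)).enorm.measurable.pow_const 2).const_mul 2
  calc ‖φ x‖ₑ ^ 2 = ⨍⁻ _ in ball 0 δ, ‖φ x‖ₑ ^ 2 ∂η :=
        (setLAverage_const (measure_ball_pos η 0 hδ).ne' measure_ball_lt_top.ne _).symm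
    _ ≤ ⨍⁻ y in ball 0 δ, (2 * ‖φ (x + y)‖ₑ ^ 2 +
          2 * ENNReal.ofReal δ ^ 2 * (ENNReal.ofReal (s + 1)⁻¹ * G y)) ∂η := by
        refine laverage_mono_ae ?_
        filter_upwards [ae_restrict_mem measurableSet_ball] with y hy
        have hyδ : ‖y‖ₑ ≤ ENNReal.ofReal δ := by
          rw [← ofReal_norm]
          exact ENNReal.ofReal_le_ofReal (mem_ball_zero_iff.1 hy).le
        refine (enorm_sq_le_add_lintegral_enorm_fderiv_sq hφ hs x y).trans ?_
        gcongr
    _ = _ := by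
        rw [laverage_eq', laverage_eq', laverage_eq', lintegral_add_left hmeas,
          lintegral_const_mul' _ _ (by finiteness), lintegral_const_mul' _ _ (by finiteness),
          lintegral_const_mul' _ _ (by finiteness)]

end Segment

namespace IsUpperRegular

variable {E F : Type*} [NormedAddCommGroup E] [NormedSpace ℝ E] [FiniteDimensional ℝ E]
  [MeasurableSpace E] [BorelSpace E] [NormedAddCommGroup F] [NormedSpace ℝ F]
  {ν : Measure E} {C α : ℝ}

theorem lintegral_setLAverage_ball_comp_add_smul_le (hν : IsUpperRegular ν C α) (η : Measure E)
    [η.IsAddHaarMeasure] {h : E → ℝ≥0∞} (hh : Measurable h) {t δ : ℝ} (ht : 0 < t) (hδ : 0 < δ) :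
    ∫⁻ x, ⨍⁻ y in ball 0 δ, h (x + t • y) ∂η ∂ν ≤
      ENNReal.ofReal (t ^ (α - finrank ℝ E)) *
        (ENNReal.ofReal (C / η.real (ball 0 1) * δ ^ (α - finrank ℝ E)) * ∫⁻ z, h z ∂η) := by
  simp only [setLAverage_ball_comp_add_smul η h _ ht]
  refine (hν.lintegral_setLAverage_ball_le η hh (mul_pos ht hδ)).trans_eq ?_
  rw [Real.mul_rpow ht.le hδ.le, mul_left_comm, ENNReal.ofReal_mul (by positivity), mul_assoc]

theorem lintegral_setLAverage_lintegral_segment_le (hν : IsUpperRegular ν C α) (η : Measure E)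
    [η.IsAddHaarMeasure] {h : E → ℝ≥0∞} (hh : Measurable h) {s : ℝ} (hs : -1 < s)
    (hα : α - finrank ℝ E = 2 * s) {δ : ℝ} (hδ : 0 < δ) :
    ∫⁻ x, ⨍⁻ y in ball 0 δ,
        (∫⁻ t in Ioo (0 : ℝ) 1, (ENNReal.ofReal (t ^ s))⁻¹ * h (x + t • y)) ∂η ∂ν ≤
      ENNReal.ofReal (s + 1)⁻¹ *
        (ENNReal.ofReal (C / η.real (ball 0 1) * δ ^ (2 * s)) * ∫⁻ z, h z ∂η) := by
  have := hν.isLocallyFiniteMeasure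
  set A := ENNReal.ofReal (C / η.real (ball 0 1) * δ ^ (2 * s)) * ∫⁻ z, h z ∂η
  have hmeas : Measurable fun p : (E × E) × ℝ =>
      (ENNReal.ofReal (p.2 ^ s))⁻¹ * h (p.1.1 + p.2 • p.1.2) := by
    fun_prop
  simp only [setLAverage_eq']
  rw [lintegral_lintegral_lintegral_rotate hmeas, ← lintegral_Ioo_zero_one_rpow hs,
    ← lintegral_mul_const _ (by fun_prop)]
  refine setLIntegral_mono' measurableSet_Ioo fun t ht => ?_
  have hts : 0 < t ^ s := Real.rpow_pos_of_pos ht.1 s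
  have weight_ne_top : (ENNReal.ofReal (t ^ s))⁻¹ ≠ ∞ :=
    ENNReal.inv_ne_top.2 (ENNReal.ofReal_pos.2 hts).ne'
  simp only [lintegral_const_mul' _ _ weight_ne_top, ← setLAverage_eq']
  calc (ENNReal.ofReal (t ^ s))⁻¹ * ∫⁻ x, ⨍⁻ y in ball 0 δ, h (x + t • y) ∂η ∂ν
      ≤ (ENNReal.ofReal (t ^ s))⁻¹ * (ENNReal.ofReal (t ^ (2 * s)) * A) := by
        gcongr
        simpa only [hα] using hν.lintegral_setLAverage_ball_comp_add_smul_le η hh ht.1 hδ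
    _ = ENNReal.ofReal (t ^ s) * A := by
        rw [← mul_assoc, ← ENNReal.ofReal_inv_of_pos hts, ← ENNReal.ofReal_mul (by positivity),
          two_mul, Real.rpow_add ht.1, inv_mul_cancel_left₀ hts.ne']

theorem lintegral_enorm_sq_le (hν : IsUpperRegular ν C α) (η : Measure E) [η.IsAddHaarMeasure]
    {φ : E → F} (hφ : ContDiff ℝ 1 φ) {s : ℝ} (hs : -1 < s) (hα : α - finrank ℝ E = 2 * s)
    {δ : ℝ} (hδ : 0 < δ) :
    ∫⁻ x, ‖φ x‖ₑ ^ 2 ∂ν ≤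
      ENNReal.ofReal (2 * (δ / (s + 1)) ^ 2 * (C / η.real (ball 0 1) * δ ^ (2 * s))) *
          ∫⁻ x, ‖fderiv ℝ φ x‖ₑ ^ 2 ∂η +
        ENNReal.ofReal (2 * (C / η.real (ball 0 1) * δ ^ (2 * s))) * ∫⁻ x, ‖φ x‖ₑ ^ 2 ∂η := by
  have := hν.isLocallyFiniteMeasure
  set B := C / η.real (ball 0 1) * δ ^ (2 * s)
  set G : E → E → ℝ≥0∞ := fun x y =>
    ∫⁻ t in Ioo (0 : ℝ) 1, (ENNReal.ofReal (t ^ s))⁻¹ * ‖fderiv ℝ φ (x + t • y)‖ₑ ^ 2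
  have hdφ : Continuous (fderiv ℝ φ) := hφ.continuous_fderiv one_ne_zero
  have hmeas : Measurable fun x => 2 * ⨍⁻ y in ball 0 δ, ‖φ (x + y)‖ₑ ^ 2 ∂η := by
    simp only [setLAverage_eq']
    exact ((hφ.continuous.comp continuous_add).enorm.measurable.pow_const
      2).lintegral_prod_right'.const_mul 2
  have average_φ : ∫⁻ x, ⨍⁻ y in ball 0 δ, ‖φ (x + y)‖ₑ ^ 2 ∂η ∂ν ≤
      ENNReal.ofReal B * ∫⁻ x, ‖φ x‖ₑ ^ 2 ∂η := by
    simpa [hα] using hν.lintegral_setLAverage_ball_comp_add_smul_le η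
      (h := fun x => ‖φ x‖ₑ ^ 2) (hφ.continuous.enorm.measurable.pow_const 2) one_pos hδ
  have average_dφ : ∫⁻ x, ⨍⁻ y in ball 0 δ, G x y ∂η ∂ν ≤
      ENNReal.ofReal (s + 1)⁻¹ * (ENNReal.ofReal B * ∫⁻ x, ‖fderiv ℝ φ x‖ₑ ^ 2 ∂η) :=
    hν.lintegral_setLAverage_lintegral_segment_le η (hdφ.enorm.measurable.pow_const 2) hs hα hδ
  calc ∫⁻ x, ‖φ x‖ₑ ^ 2 ∂ν
      ≤ ∫⁻ x, (2 * ⨍⁻ y in ball 0 δ, ‖φ (x + y)‖ₑ ^ 2 ∂η + 2 * ENNReal.ofReal δ ^ 2 *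
          (ENNReal.ofReal (s + 1)⁻¹ * ⨍⁻ y in ball 0 δ, G x y ∂η)) ∂ν :=
        lintegral_mono fun x => enorm_sq_le_add_setLAverage_ball η hφ hs x hδ
    _ = 2 * ∫⁻ x, ⨍⁻ y in ball 0 δ, ‖φ (x + y)‖ₑ ^ 2 ∂η ∂ν + 2 * ENNReal.ofReal δ ^ 2 *
          (ENNReal.ofReal (s + 1)⁻¹ * ∫⁻ x, ⨍⁻ y in ball 0 δ, G x y ∂η ∂ν) := by
        rw [lintegral_add_left hmeas, lintegral_const_mul' _ _ (by finiteness),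
          lintegral_const_mul' _ _ (by finiteness), lintegral_const_mul' _ _ (by finiteness)]
    _ ≤ 2 * (ENNReal.ofReal B * ∫⁻ x, ‖φ x‖ₑ ^ 2 ∂η) + 2 * ENNReal.ofReal δ ^ 2 *
          (ENNReal.ofReal (s + 1)⁻¹ *
            (ENNReal.ofReal (s + 1)⁻¹ * (ENNReal.ofReal B * ∫⁻ x, ‖fderiv ℝ φ x‖ₑ ^ 2 ∂η))) := by
        gcongr
    _ = _ := by
        rw [ENNReal.ofReal_mul (p := 2 * (δ / (s + 1)) ^ 2) (by positivity),
          ENNReal.ofReal_mul zero_le_two, ENNReal.ofReal_mul zero_le_two,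
          ENNReal.ofReal_pow (div_nonneg hδ.le (by linarith)), div_eq_mul_inv,
          ENNReal.ofReal_mul hδ.le, ENNReal.ofReal_ofNat]
        ring

theorem exists_lintegral_enorm_sq_le (hν : IsUpperRegular ν C α) (hα : finrank ℝ E - 2 < α)
    (η : Measure E) [η.IsAddHaarMeasure] {a : ℝ} (ha : 0 < a) :
    ∃ b : ℝ, 0 ≤ b ∧ ∀ φ : E → F, ContDiff ℝ 1 φ →
      ∫⁻ x, ‖φ x‖ₑ ^ 2 ∂ν ≤ ENNReal.ofReal a * ∫⁻ x, ‖fderiv ℝ φ x‖ₑ ^ 2 ∂η +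
        ENNReal.ofReal b * ∫⁻ x, ‖φ x‖ₑ ^ 2 ∂η := by
  set s := (α - finrank ℝ E) / 2 with hs
  set D := C / η.real (ball (0 : E) 1)
  have hs1 : -1 < s := by rw [hs]; linarith
  have coeff_tendsto : Tendsto (fun δ : ℝ => 2 / (s + 1) ^ 2 * D * δ ^ (2 * s + 2))
      (𝓝[>] 0) (𝓝 0) := by
    have hpow : Tendsto (fun δ : ℝ => δ ^ (2 * s + 2)) (𝓝[>] 0) (𝓝 0) := by
      simpa [Real.zero_rpow (by linarith : 2 * s + 2 ≠ 0)] using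
        (Real.continuousAt_rpow_const 0 (2 * s + 2) (.inr (by linarith))).tendsto.mono_left
          nhdsWithin_le_nhds
    simpa using hpow.const_mul (2 / (s + 1) ^ 2 * D)
  obtain ⟨δ, hδa, hδ : 0 < δ⟩ :=
    ((coeff_tendsto.eventually_le_const ha).and self_mem_nhdsWithin).exists
  have coeff_eq : 2 * (δ / (s + 1)) ^ 2 * (D * δ ^ (2 * s)) =
      2 / (s + 1) ^ 2 * D * δ ^ (2 * s + 2) := by
    rw [Real.rpow_add hδ, Real.rpow_two, div_pow]
    ring
  refine ⟨max (2 * (D * δ ^ (2 * s))) 0, le_max_right _ _, fun φ hφ => ?_⟩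
  refine (hν.lintegral_enorm_sq_le η hφ hs1 (by rw [hs]; ring) hδ).trans ?_
  gcongr
  · exact coeff_eq.trans_le hδa
  · exact le_max_left _ _

theorem exists_memLp_two_and_integral_norm_sq_le (hν : IsUpperRegular ν C α)
    (hα : finrank ℝ E - 2 < α) (η : Measure E) [η.IsAddHaarMeasure] {a : ℝ} (ha : 0 < a) :
    ∃ b : ℝ, ∀ φ : E → F, ContDiff ℝ 1 φ → MemLp φ 2 η → MemLp (fderiv ℝ φ) 2 η →
      MemLp φ 2 ν ∧
        ∫ x, ‖φ x‖ ^ 2 ∂ν ≤ a * ∫ x, ‖fderiv ℝ φ x‖ ^ 2 ∂η + b * ∫ x, ‖φ x‖ ^ 2 ∂η := by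
  obtain ⟨b, hb, hbound⟩ := hν.exists_lintegral_enorm_sq_le (F := F) hα η ha
  refine ⟨b, fun φ hφ hφ_mem hdφ_mem => ?_⟩
  have bound := hbound φ hφ
  rw [← ofReal_integral_norm_sq_eq_lintegral hφ_mem,
    ← ofReal_integral_norm_sq_eq_lintegral hdφ_mem, ← ENNReal.ofReal_mul ha.le,
    ← ENNReal.ofReal_mul hb, ← ENNReal.ofReal_add (by positivity) (by positivity)] at bound
  have hφ_memν : MemLp φ 2 ν := memLp_two_of_lintegral_enorm_sq_ne_top
    hφ.continuous.aestronglyMeasurable (bound.trans_lt ENNReal.ofReal_lt_top).ne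
  rw [← ofReal_integral_norm_sq_eq_lintegral hφ_memν,
    ENNReal.ofReal_le_ofReal_iff (by positivity)] at bound
  exact ⟨hφ_memν, bound⟩

end IsUpperRegular

theorem stmt9_general {E F : Type*} [NormedAddCommGroup E] [NormedSpace ℝ E]
    [FiniteDimensional ℝ E] [MeasurableSpace E] [BorelSpace E] [NormedAddCommGroup F]
    [NormedSpace ℝ F] (η : Measure E) [η.IsAddHaarMeasure] (μ : SignedMeasure E) {C α : ℝ}
    (hα : finrank ℝ E - 2 < α) (hμ : IsUpperRegular μ.totalVariation C α) {a : ℝ} (ha : 0 < a) :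
    ∃ b : ℝ, ∀ φ : E → F, ContDiff ℝ 1 φ → MemLp φ 2 η → MemLp (fderiv ℝ φ) 2 η →
      MemLp φ 2 μ.totalVariation ∧
        |∫ x, ‖φ x‖ ^ 2 ∂μ.toJordanDecomposition.posPart -
            ∫ x, ‖φ x‖ ^ 2 ∂μ.toJordanDecomposition.negPart| ≤
          a * ∫ x, ‖fderiv ℝ φ x‖ ^ 2 ∂η + b * ∫ x, ‖φ x‖ ^ 2 ∂η := by
  obtain ⟨b, hb⟩ := hμ.exists_memLp_two_and_integral_norm_sq_le (F := F) hα η ha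
  refine ⟨b, fun φ hφ hφ_mem hdφ_mem => ?_⟩
  obtain ⟨hφ_memμ, bound⟩ := hb φ hφ hφ_mem hdφ_mem
  refine ⟨hφ_memμ, le_trans ?_ bound⟩
  simpa only [abs_pow, abs_norm] using
    abs_integral_posPart_sub_integral_negPart_le μ (hφ_memμ.integrable_norm_pow two_ne_zero)

/-- A compactly supported `α`-dimensional signed measure `μ` on `ℝⁿ`
(`n ≥ 3`, `α > n-2`) is infinitesimally form-bounded relative to `−Δ`: for every `a > 0`
there is `b < ∞` with `|∫ |φ|² dμ| ≤ a ‖∇φ‖₂² + b ‖φ‖₂²` for all test functions `φ`.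
The integral against the signed measure is the difference of integrals against the
positive and negative parts of its Jordan decomposition. -/
theorem stmt9 (n : ℕ) (hn : 3 ≤ n)
    (μ : SignedMeasure (EuclideanSpace ℝ (Fin n)))
    (M : ℝ) (hM : 0 < M)
    (hsupp : μ.totalVariation (closedBall (0 : EuclideanSpace ℝ (Fin n)) M)ᶜ = 0)
    (Cμ α : ℝ) (hCμ : 0 ≤ Cμ) (hα : (n : ℝ) - 2 < α)
    (hdim : ∀ (x : EuclideanSpace ℝ (Fin n)) (r : ℝ), 0 < r →
      μ.totalVariation (ball x r) ≤ ENNReal.ofReal (Cμ * r ^ α)) :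
    ∀ a : ℝ, 0 < a → ∃ b : ℝ,
      ∀ φ : EuclideanSpace ℝ (Fin n) → ℝ, ContDiff ℝ (⊤ : ℕ∞) φ → HasCompactSupport φ →
        |(∫ x, (φ x) ^ 2 ∂μ.toJordanDecomposition.posPart) -
            ∫ x, (φ x) ^ 2 ∂μ.toJordanDecomposition.negPart|
          ≤ a * (∫ x, ‖fderiv ℝ φ x‖ ^ 2) + b * ∫ x, (φ x) ^ 2 := by
  intro a ha
  obtain ⟨b, hb⟩ := stmt9_general (F := ℝ) volume μ (by simpa using hα) hdim ha
  refine ⟨b, fun φ hφ hc => ?_⟩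
  have hφ₁ : ContDiff ℝ 1 φ := hφ.of_le (by exact_mod_cast le_top)
  simpa using (hb φ hφ₁ (hφ.continuous.memLp_of_hasCompactSupport hc)
    ((hφ₁.continuous_fderiv one_ne_zero).memLp_of_hasCompactSupport (hc.fderiv ℝ))).2
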